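/- arXiv:0709.0378 — 2 statements merged into one kernel-verified Lean document; each statement's English description precedes it below -/
import Mathlib

section
/- Consequently, the final density of the spiral model satisfies ρ_∞(ρ) ≥ μ^ρ(ℱ₀^{NE−SW}), where ℱ₀^{NE−SW} is the event that both the NE and SW occupied clusters of the origin are infinite; in particular, since μ^ρ(ℱ₀^{NE−SW}) ≥ θ_{OP}(ρ)² where θ_{OP}(ρ) is the oriented site percolation probability, the critical density ρ_c of the spiral model satisfies ρ_c ≤ p_c^{OP}. -/
open scoped Classical ENNReal

/-- A site of the two-dimensional lattice. -/
abbrev Site : Type := ℤ × ℤ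
/-- A configuration: `true` = occupied, `false` = empty. -/
abbrev Config : Type := Site → Bool

def e1 : Site := (1, 0)
def e2 : Site := (0, 1)

/-- Both sites `a` and `b` are empty in `η`. -/
def emptyPair (η : Config) (a b : Site) : Prop := η a = false ∧ η b = false

/-- The spiral model constraint `𝒜ₓ`: (both NE or both SW neighbours empty) and
(both NW or both SE neighbours empty). -/
def constraintA (η : Config) (x : Site) : Prop :=
  (emptyPair η (x + e2) (x + e1 + e2) ∨ emptyPair η (x - e2) (x - e1 - e2)) ∧
  (emptyPair η (x - e1) (x - e1 + e2) ∨ emptyPair η (x + e1) (x + e1 - e2))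

/-- The spiral model update operator: an occupied site is emptied iff the constraint holds;
empty sites stay empty. -/
noncomputable def T (η : Config) : Config := fun x =>
  if η x = true ∧ ¬ constraintA η x then true else false

/-- `μ` is the Bernoulli(ρ) product measure: every finite cylinder event has the product
probability. -/
def IsBernoulli (ρ : ℝ) (μ : MeasureTheory.Measure Config) : Prop :=
  ∀ (s : Finset Site) (f : Site → Bool),
    μ {η | ∀ x ∈ s, η x = f x} =
      ∏ x ∈ s, ENNReal.ofReal (if f x then ρ else 1 - ρ)

/-- One step of a North-East occupied path: `b ∈ {a+e₂, a+e₁+e₂}` and `b` occupied. -/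
def NEstep (η : Config) (a b : Site) : Prop :=
  (b = a + e2 ∨ b = a + e1 + e2) ∧ η b = true

/-- One step of a South-West occupied path. -/
def SWstep (η : Config) (a b : Site) : Prop :=
  (b = a - e2 ∨ b = a - e1 - e2) ∧ η b = true

/-- One step of an oriented-percolation occupied path: steps `e₁` or `e₂`. -/
def OPstep (η : Config) (a b : Site) : Prop :=
  (b = a + e1 ∨ b = a + e2) ∧ η b = true

/-- `y` is reachable from `x` by an occupied NE path (all sites occupied, including `x`). -/
def reachNE (η : Config) (x y : Site) : Prop :=
  η x = true ∧ Relation.ReflTransGen (NEstep η) x y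

def reachSW (η : Config) (x y : Site) : Prop :=
  η x = true ∧ Relation.ReflTransGen (SWstep η) x y

def reachOP (η : Config) (x y : Site) : Prop :=
  η x = true ∧ Relation.ReflTransGen (OPstep η) x y

/-- The NE occupied cluster of `x`. -/
def clusterNE (η : Config) (x : Site) : Set Site := {y | reachNE η x y}

def clusterSW (η : Config) (x : Site) : Set Site := {y | reachSW η x y}

def clusterOP (η : Config) (x : Site) : Set Site := {y | reachOP η x y}

/-!
If the NE and the SW clusters of a site are both infinite, then the site lies on a bi-infinite
occupied path of NE steps. Every site of such a path keeps an occupied NE and an occupied SW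
neighbour, so the dynamics never empties it; this bounds the final density from below.

The NE cluster depends on sites of nonnegative height only, and apart from the origin the SW cluster
depends on sites of negative height only, so by independence both are infinite with probability at
least the product of the two probabilities. A linear map carries oriented percolation to the NE
steps and `x ↦ -x` exchanges NE and SW, so this product is `θ_OP²`. Finally `θ_OP` is monotone in
the density, by coupling through i.i.d. uniform variables, which compares the critical points.
-/

open MeasureTheory ProbabilityTheory Relation Function

/-! ### Directed site percolation -/

section Percolation

variable {V W : Type*} {R : V → V → Prop} {S : W → W → Prop} {η : V → Bool} {x y : V}

/-- A step of an occupied path in the digraph `R`: as in `NEstep`, only the endpoint is required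
to be occupied. -/
def OccStep (R : V → V → Prop) (η : V → Bool) (a b : V) : Prop := R a b ∧ η b = true

/-- The sites that occupied paths of the digraph `R` reach from `x`, where the state of `x` itself
is ignored. -/
def occReach (R : V → V → Prop) (η : V → Bool) (x : V) : Set V :=
  {y | ReflTransGen (OccStep R η) x y}

/-- The occupied cluster of `x` for directed site percolation on the digraph `R`; it is empty when
`x` is empty. -/
def occCluster (R : V → V → Prop) (η : V → Bool) (x : V) : Set V :=
  {y | η x = true ∧ ReflTransGen (OccStep R η) x y}

/-- The event that the occupied cluster of `x` is infinite. -/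
def percolationEvent (R : V → V → Prop) (x : V) : Set (V → Bool) :=
  {η | (occCluster R η x).Infinite}

lemma mem_percolationEvent_iff :
    η ∈ percolationEvent R x ↔ η x = true ∧ (occReach R η x).Infinite := by
  by_cases h : η x = true <;> simp [percolationEvent, occCluster, occReach, h]

lemma occCluster_subset_of_occStep (hx : η x = true) (hxy : OccStep R η x y) :
    occCluster R η y ⊆ occCluster R η x :=
  fun _ hz => ⟨hx, hz.2.head hxy⟩

lemma occCluster_subset_insert_biUnion :
    occCluster R η x ⊆ insert x (⋃ y ∈ {y | R x y}, occCluster R η y) := by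
  rintro z ⟨-, hz⟩
  obtain rfl | ⟨y, ⟨hxy, hy⟩, hyz⟩ := hz.cases_head
  · exact Set.mem_insert _ _
  · exact Set.mem_insert_of_mem _ (Set.mem_biUnion hxy ⟨hy, hyz⟩)

lemma exists_rel_mem_percolationEvent (hfin : {y | R x y}.Finite) (h : η ∈ percolationEvent R x) :
    ∃ y, R x y ∧ η ∈ percolationEvent R y := by
  by_contra! hc
  exact h <| ((hfin.biUnion fun y hy => Set.not_infinite.1 (hc y hy)).insert x).subset
    occCluster_subset_insert_biUnion

lemma exists_rel_mem_percolationEvent_inter_swap (hfin : {y | R x y}.Finite)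
    (h : η ∈ percolationEvent R x ∩ percolationEvent (swap R) x) :
    ∃ y, R x y ∧ η ∈ percolationEvent R y ∩ percolationEvent (swap R) y := by
  obtain ⟨y, hxy, hy⟩ := exists_rel_mem_percolationEvent hfin h.1
  have hx_occ := (mem_percolationEvent_iff.1 h.1).1
  have hy_occ := (mem_percolationEvent_iff.1 hy).1
  exact ⟨y, hxy, hy, h.2.mono (occCluster_subset_of_occStep hy_occ ⟨hxy, hx_occ⟩)⟩

lemma isUpperSet_percolationEvent (R : V → V → Prop) (x : V) :
    IsUpperSet (percolationEvent R x) := by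
  intro η η' hle h
  have hocc (y : V) (hy : η y = true) : η' y = true := hle y hy
  exact h.mono fun y hy =>
    ⟨hocc x hy.1, ReflTransGen.mono (fun _ b hab => ⟨hab.1, hocc b hab.2⟩) _ _ hy.2⟩

lemma image_occReach_comp (φ : R ≃r S) (η : W → Bool) (x : V) :
    φ '' occReach R (η ∘ φ) x = occReach S η (φ x) := by
  ext w
  constructor
  · rintro ⟨y, hy, rfl⟩
    exact ReflTransGen.lift φ (fun a b hab => ⟨φ.map_rel_iff.2 hab.1, hab.2⟩) _ _ hy
  · intro hw
    refine ⟨φ.symm w, ?_, φ.apply_symm_apply w⟩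
    have hstep (a b : W) (hab : OccStep S η a b) :
        OccStep R (η ∘ φ) (φ.symm a) (φ.symm b) :=
      ⟨φ.symm.map_rel_iff.2 hab.1, by simpa using hab.2⟩
    simpa [occReach, onFun] using ReflTransGen.lift φ.symm hstep _ _ hw

lemma comp_mem_percolationEvent_iff (φ : R ≃r S) (η : W → Bool) (x : V) :
    η ∘ φ ∈ percolationEvent R x ↔ η ∈ percolationEvent S (φ x) := by
  rw [mem_percolationEvent_iff, mem_percolationEvent_iff, ← image_occReach_comp,
    Set.infinite_image_iff φ.injective.injOn, comp_apply]

end Percolation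

/-! ### Measurability -/

section Measurability

variable {V : Type*} {R : V → V → Prop} {m : MeasurableSpace (V → Bool)} {x : V}

lemma measurableSet_isChain_occStep
    (hm : ∀ y, TransGen R x y → MeasurableSet[m] {η | η y = true}) (l : List V) :
    MeasurableSet[m] {η | (x :: l).IsChain (OccStep R η)} := by
  induction l generalizing x with
  | nil => simp
  | cons y l ih =>
    by_cases hxy : R x y
    · simp only [List.isChain_cons_cons, OccStep, hxy, true_and]
      exact (hm y (.single hxy)).inter (ih fun z hz => hm z (hz.head hxy))
    · simp [OccStep, hxy]

variable [Countable V]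

lemma measurableSet_mem_occReach
    (hm : ∀ y, TransGen R x y → MeasurableSet[m] {η | η y = true}) (y : V) :
    MeasurableSet[m] {η | y ∈ occReach R η x} := by
  have hpaths : {η | y ∈ occReach R η x} = ⋃ l : List V,
      {η | (x :: l).IsChain (OccStep R η)} ∩
        {_η | (x :: l).getLast (List.cons_ne_nil x l) = y} := by
    ext η
    simp only [Set.mem_iUnion]
    exact ⟨List.exists_isChain_cons_of_relationReflTransGen,
      fun ⟨l, hl, hlast⟩ => List.relationReflTransGen_of_exists_isChain_cons l hl hlast⟩
  rw [hpaths]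
  exact .iUnion fun l => (measurableSet_isChain_occStep hm l).inter (.const _)

lemma measurableSet_infinite_occReach
    (hm : ∀ y, TransGen R x y → MeasurableSet[m] {η | η y = true}) :
    MeasurableSet[m] {η | (occReach R η x).Infinite} := by
  have hmeas : Measurable[m] fun η => occReach R η x :=
    measurable_set_iff.2 fun y => measurableSet_setOfPred.1 (measurableSet_mem_occReach hm y)
  exact hmeas MeasurableSet.setOfPred_finite.compl

lemma measurableSet_percolationEvent_of_reflTransGen
    (hm : ∀ y, ReflTransGen R x y → MeasurableSet[m] {η | η y = true}) :
    MeasurableSet[m] (percolationEvent R x) := by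
  have hevent : percolationEvent R x = {η | η x = true} ∩ {η | (occReach R η x).Infinite} :=
    Set.ext fun _ => mem_percolationEvent_iff
  rw [hevent]
  exact (hm x .refl).inter (measurableSet_infinite_occReach fun y hy => hm y hy.to_reflTransGen)

end Measurability

lemma measurableSet_percolationEvent {V : Type*} [Countable V] (R : V → V → Prop) (x : V) :
    MeasurableSet (percolationEvent R x) :=
  measurableSet_percolationEvent_of_reflTransGen fun y _ =>
    measurableSet_eq_fun (measurable_pi_apply y) measurable_const

/-! ### The Bernoulli site percolation measure -/

section Bernoulli

variable {V W : Type*} {p : unitInterval}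

/-- Bernoulli site percolation of density `p`: the states of the sites are i.i.d. -/
noncomputable def siteBernoulli (V : Type*) (p : unitInterval) : Measure (V → Bool) :=
  Measure.infinitePi fun _ => bernoulliMeasure true false p

lemma siteBernoulli_one : siteBernoulli V 1 = Measure.dirac fun _ => true := by
  simp [siteBernoulli]

lemma map_comp_siteBernoulli (e : V ≃ W) :
    (siteBernoulli W p).map (fun η => η ∘ e) = siteBernoulli V p := by
  rw [siteBernoulli, siteBernoulli]
  have h := Measure.infinitePi_map_piCongrLeft (fun _ : V => bernoulliMeasure true false p) e.symm
  convert h using 2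
  ext η v
  simpa using (MeasurableEquiv.piCongrLeft_apply_apply (β := fun _ => Bool) e.symm η (e v)).symm

lemma siteBernoulli_percolationEvent_relIso [Countable V] [Countable W] {R : V → V → Prop}
    {S : W → W → Prop} (φ : R ≃r S) (x : V) :
    siteBernoulli W p (percolationEvent S (φ x)) = siteBernoulli V p (percolationEvent R x) := by
  rw [← map_comp_siteBernoulli φ.toEquiv,
    Measure.map_apply (by fun_prop) (measurableSet_percolationEvent R x)]
  exact congrArg _ (Set.ext fun η => (comp_mem_percolationEvent_iff φ η x).symm)

lemma ofReal_coe_unitInterval (p : unitInterval) :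
    ENNReal.ofReal p = unitInterval.toNNReal p :=
  ENNReal.ofReal_eq_coe_nnreal p.2.1

lemma measurable_decide_le (p : unitInterval) :
    Measurable fun u : unitInterval => decide (u ≤ p) := by
  refine measurable_to_bool ?_
  convert measurableSet_Iic (a := p)
  ext
  simp

lemma map_decide_le_volume (p : unitInterval) :
    (volume : Measure unitInterval).map (fun u => decide (u ≤ p)) =
      bernoulliMeasure true false p := by
  refine Measure.ext_of_singleton fun b => ?_
  rw [Measure.map_apply (measurable_decide_le p) (measurableSet_singleton b)]
  cases b
  · have hpre : (fun u => decide (u ≤ p)) ⁻¹' {false} = Set.Ioi p := by ext; simp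
    rw [hpre, unitInterval.volume_Ioi, ← unitInterval.coe_symm_eq, ofReal_coe_unitInterval]
    simp
  · have hpre : (fun u => decide (u ≤ p)) ⁻¹' {true} = Set.Iic p := by ext; simp
    rw [hpre, unitInterval.volume_Iic, ofReal_coe_unitInterval]
    simp

lemma siteBernoulli_eq_map_decide_le (p : unitInterval) :
    siteBernoulli V p =
      (Measure.infinitePi fun _ : V => (volume : Measure unitInterval)).map
        fun ω v => decide (ω v ≤ p) := by
  simp [siteBernoulli, map_decide_le_volume,
    Measure.infinitePi_map_pi _ fun _ => measurable_decide_le p]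

lemma monotone_siteBernoulli {A : Set (V → Bool)} (hA : IsUpperSet A) (hAm : MeasurableSet A) :
    Monotone fun p => siteBernoulli V p A := by
  intro p q hpq
  have hmeas (r : unitInterval) :
      Measurable fun (ω : V → unitInterval) (v : V) => decide (ω v ≤ r) :=
    measurable_pi_lambda _ fun v => (measurable_decide_le r).comp (measurable_pi_apply v)
  simp only [siteBernoulli_eq_map_decide_le, Measure.map_apply (hmeas _) hAm]
  refine measure_mono fun ω hω => hA (fun v => ?_) hω
  simpa [Bool.le_iff_imp] using fun hv : ω v ≤ p => hv.trans hpq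

/-- The `σ`-algebra generated by the states of the sites in `U`. -/
abbrev siteSigma (U : Set V) : MeasurableSpace (V → Bool) :=
  ⨆ v ∈ U, MeasurableSpace.comap (fun η => η v) inferInstance

lemma measurableSet_siteSigma {U : Set V} {v : V} (hv : v ∈ U) :
    MeasurableSet[siteSigma U] {η | η v = true} := by
  have hle := le_iSup₂ (f := fun (v : V) (_ : v ∈ U) =>
    MeasurableSpace.comap (fun η : V → Bool => η v) inferInstance) v hv
  exact hle _ ⟨{true}, measurableSet_singleton true, rfl⟩

lemma indep_siteSigma {U U' : Set V} (h : Disjoint U U') :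
    Indep (siteSigma U) (siteSigma U') (siteBernoulli V p) :=
  indep_iSup_of_disjoint (fun v => (measurable_pi_apply v).comap_le)
    (iIndepFun_infinitePi (X := fun _ b => b) fun _ => measurable_id).iIndep h

lemma mul_le_siteBernoulli_percolationEvent_inter [Countable V] {R S : V → V → Prop} {x : V}
    (h : Disjoint {y | ReflTransGen R x y} {y | TransGen S x y}) :
    siteBernoulli V p (percolationEvent R x) * siteBernoulli V p (percolationEvent S x) ≤
      siteBernoulli V p (percolationEvent R x ∩ percolationEvent S x) := by
  have hindep := (Indep_iff _ _ _).1 (indep_siteSigma (p := p) h) _ _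
    (measurableSet_percolationEvent_of_reflTransGen fun y hy => measurableSet_siteSigma hy)
    (measurableSet_infinite_occReach fun y hy => measurableSet_siteSigma hy)
  calc
    _ ≤ siteBernoulli V p (percolationEvent R x) *
        siteBernoulli V p {η | (occReach S η x).Infinite} := by
      gcongr
      exact fun η hη => (mem_percolationEvent_iff.1 hη).2
    _ = siteBernoulli V p (percolationEvent R x ∩ {η | (occReach S η x).Infinite}) := hindep.symm
    _ ≤ siteBernoulli V p (percolationEvent R x ∩ percolationEvent S x) :=
      measure_mono fun η hη =>
        ⟨hη.1, mem_percolationEvent_iff.2 ⟨(mem_percolationEvent_iff.1 hη.1).1, hη.2⟩⟩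

lemma sq_le_siteBernoulli_percolationEvent_inter_swap [Countable V] {R : V → V → Prop} {x : V}
    (φ : R ≃r swap R) (hφ : φ x = x) (hx : ¬ TransGen R x x) :
    siteBernoulli V p (percolationEvent R x) ^ 2 ≤
      siteBernoulli V p (percolationEvent R x ∩ percolationEvent (swap R) x) := by
  have hdisj : Disjoint {y | ReflTransGen R x y} {y | TransGen (swap R) x y} :=
    Set.disjoint_left.2 fun y hy hy' => hx (.trans_right hy (transGen_swap.1 hy'))
  have hswap := siteBernoulli_percolationEvent_relIso (p := p) φ x
  rw [hφ] at hswap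
  simpa only [sq, hswap] using mul_le_siteBernoulli_percolationEvent_inter (p := p) hdisj

lemma siteBernoulli_one_percolationEvent [Countable V] {R : V → V → Prop} {x : V}
    (h : {y | ReflTransGen R x y}.Infinite) : siteBernoulli V 1 (percolationEvent R x) = 1 := by
  have hmem : (fun _ => true) ∈ percolationEvent R x := by
    have hstep : OccStep R (fun _ => true) = R := by ext; simp [OccStep]
    simpa [percolationEvent, occCluster, hstep] using h
  rw [siteBernoulli_one, Measure.dirac_apply' _ (measurableSet_percolationEvent R x),
    Set.indicator_of_mem hmem, Pi.one_apply]

lemma IsBernoulli.eq_siteBernoulli {μ : Measure Config} (h : IsBernoulli p μ) :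
    μ = siteBernoulli Site p := by
  refine IsProjectiveLimit.unique (fun I => Measure.ext_of_singleton fun f => ?_)
    (Measure.isProjectiveLimit_infinitePi _)
  obtain ⟨η, rfl⟩ : ∃ η : Config, I.restrict η = f :=
    ⟨fun v => if hv : v ∈ I then f ⟨v, hv⟩ else false, by ext; simp⟩
  have hpre : I.restrict (π := fun _ => Bool) ⁻¹' {I.restrict η} =
      {ζ | ∀ x ∈ I, ζ x = η x} := by
    ext ζ
    simp only [Set.mem_preimage, Set.mem_singleton_iff, Set.mem_ofPred_eq, funext_iff,
      Subtype.forall, Finset.restrict]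
  rw [Measure.map_apply (Finset.measurable_restrict I) (measurableSet_singleton _), hpre, h,
    Measure.pi_singleton, ← Finset.prod_coe_sort]
  refine Finset.prod_congr rfl fun v _ => ?_
  rw [Finset.restrict]
  cases η v <;> simp [← unitInterval.coe_symm_eq, ofReal_coe_unitInterval]

end Bernoulli

/-! ### The lattice relations -/

/-- The digraph of `NEstep`; its reversal `swap northEast` is the digraph of `SWstep`. -/
def northEast (a b : Site) : Prop := b = a + e2 ∨ b = a + e1 + e2

/-- The digraph of `OPstep`. -/
def rightUp (a b : Site) : Prop := b = a + e1 ∨ b = a + e2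

lemma setOf_clusterNE_infinite (x : Site) :
    {η | (clusterNE η x).Infinite} = percolationEvent northEast x := rfl

lemma setOf_clusterOP_infinite (x : Site) :
    {η | (clusterOP η x).Infinite} = percolationEvent rightUp x := rfl

lemma swap_northEast_iff {a b : Site} : swap northEast a b ↔ b = a - e2 ∨ b = a - e1 - e2 := by
  simp only [swap, northEast, eq_sub_iff_add_eq, sub_sub, add_assoc, eq_comm]

lemma setOf_clusterSW_infinite (x : Site) :
    {η | (clusterSW η x).Infinite} = percolationEvent (swap northEast) x := by
  have hstep (η : Config) : SWstep η = OccStep (swap northEast) η := by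
    ext a b
    simp only [SWstep, OccStep, swap_northEast_iff]
  simp only [clusterSW, reachSW, hstep]
  rfl

lemma setOf_northEast_finite (x : Site) : {y | northEast x y}.Finite :=
  Set.toFinite {x + e2, x + e1 + e2}

lemma setOf_swap_northEast_finite (x : Site) : {y | swap northEast x y}.Finite := by
  simp only [swap_northEast_iff]
  exact Set.toFinite {x - e2, x - e1 - e2}

lemma not_transGen_northEast_self (x : Site) : ¬ TransGen northEast x x := by
  have hheight {a b : Site} (h : northEast a b) : a.2 < b.2 := by
    rcases h with rfl | rfl <;> simp [e1, e2]
  intro h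
  have hlt := TransGen.lift Prod.snd (p := (· < ·)) (fun _ _ => hheight) _ _ h
  rw [transGen_eq_self] at hlt
  exact lt_irrefl _ hlt

/-- Reflection in the origin reverses the north-east digraph. -/
def negNorthEast : northEast ≃r swap northEast where
  toEquiv := Equiv.neg Site
  map_rel_iff' := by
    intro a b
    simp only [swap, northEast, e1, e2, Equiv.neg_apply, Prod.ext_iff, Prod.fst_neg, Prod.snd_neg,
      Prod.fst_add, Prod.snd_add]
    grind

/-- The linear map with `e₁ ↦ e₂` and `e₂ ↦ e₁ + e₂`. -/
def rightUpNorthEast : rightUp ≃r northEast where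
  toFun a := (a.2, a.1 + a.2)
  invFun a := (a.2 - a.1, a.1)
  left_inv a := by simp
  right_inv a := by simp
  map_rel_iff' := by
    intro a b
    simp only [rightUp, northEast, e1, e2, Equiv.coe_fn_mk, Prod.ext_iff, Prod.fst_add,
      Prod.snd_add]
    grind

lemma infinite_reflTransGen_rightUp (x : Site) : {y | ReflTransGen rightUp x y}.Infinite := by
  refine Set.infinite_of_injective_forall_mem (f := fun n : ℕ => x + n • e1) ?_ fun n => ?_
  · intro m n h
    simpa [e1] using h
  · induction n with
    | zero => simpa using .refl
    | succ n ih => exact ih.tail (.inl (by rw [succ_nsmul, add_assoc]))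

/-! ### The spiral dynamics -/

lemma iterate_T_eq_true {U : Set Site} {η : Config} (hη : ∀ x ∈ U, η x = true)
    (hNE : ∀ x ∈ U, ∃ y ∈ U, northEast x y) (hSW : ∀ x ∈ U, ∃ y ∈ U, swap northEast x y)
    (t : ℕ) : ∀ x ∈ U, (T^[t] η) x = true := by
  induction t with
  | zero => exact hη
  | succ t ih =>
    intro x hx
    have hblocked : ¬ constraintA (T^[t] η) x := by
      rintro ⟨⟨h, h'⟩ | ⟨h, h'⟩, -⟩
      · obtain ⟨y, hy, rfl | rfl⟩ := hNE x hx <;> simp [ih _ hy] at h h'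
      · obtain ⟨y, hy, hxy⟩ := hSW x hx
        rcases swap_northEast_iff.1 hxy with rfl | rfl <;> simp [ih _ hy] at h h'
    rw [iterate_succ_apply']
    simp [T, ih x hx, hblocked]

lemma iterate_T_eq_true_of_infinite {η : Config} {x : Site} (hNE : (clusterNE η x).Infinite)
    (hSW : (clusterSW η x).Infinite) (t : ℕ) : (T^[t] η) x = true := by
  let U := {x | η ∈ percolationEvent northEast x ∩ percolationEvent (swap northEast) x}
  refine iterate_T_eq_true (U := U) (fun y hy => (mem_percolationEvent_iff.1 hy.1).1)
    (fun y hy => ?_) (fun y hy => ?_) t x ⟨hNE, ?_⟩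
  · obtain ⟨z, hyz, hz⟩ :=
      exists_rel_mem_percolationEvent_inter_swap (setOf_northEast_finite y) hy
    exact ⟨z, hz, hyz⟩
  · obtain ⟨z, hyz, hz⟩ :=
      exists_rel_mem_percolationEvent_inter_swap (setOf_swap_northEast_finite y) hy.symm
    exact ⟨z, hz.symm, hyz⟩
  · rwa [← setOf_clusterSW_infinite]

lemma measure_clusterNE_inter_clusterSW_le_iInf (μ : Measure Config) (x : Site) :
    μ ({η | (clusterNE η x).Infinite} ∩ {η | (clusterSW η x).Infinite}) ≤
      ⨅ t : ℕ, μ {η | (T^[t] η) x = true} :=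
  le_iInf fun t => measure_mono fun _ hη => iterate_T_eq_true_of_infinite hη.1 hη.2 t

/-! ### Critical points -/

lemma sSup_eq_zero_le_sInf_pos {α β : Type*} [Zero α] [Zero β] [Preorder β] {d : ℝ → α}
    {θ : ℝ → β} (hθ : MonotoneOn θ (Set.Icc 0 1)) (hθ_one : 0 < θ 1)
    (hd : ∀ ρ ∈ Set.Icc (0 : ℝ) 1, d ρ = 0 → θ ρ = 0) :
    sSup {ρ | ρ ∈ Set.Icc (0 : ℝ) 1 ∧ d ρ = 0} ≤ sInf {ρ | ρ ∈ Set.Icc (0 : ℝ) 1 ∧ 0 < θ ρ} := by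
  refine le_csInf ⟨1, by simp, hθ_one⟩ fun q ⟨hq, hθq⟩ => Real.sSup_le ?_ hq.1
  rintro ρ ⟨hρ, hdρ⟩
  by_contra! hlt
  exact (hθq.trans_le (hθ hq hρ hlt.le)).ne' (hd ρ hρ hdρ)

lemma sq_measure_clusterOP_le {ρ : ℝ} (hρ : ρ ∈ Set.Icc 0 1) {μ : Measure Config}
    (hμ : IsBernoulli ρ μ) :
    μ {η | (clusterOP η (0, 0)).Infinite} ^ 2 ≤
      μ ({η | (clusterNE η (0, 0)).Infinite} ∩ {η | (clusterSW η (0, 0)).Infinite}) := by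
  rw [setOf_clusterNE_infinite, setOf_clusterSW_infinite, setOf_clusterOP_infinite,
    IsBernoulli.eq_siteBernoulli (p := ⟨ρ, hρ⟩) hμ,
    ← siteBernoulli_percolationEvent_relIso rightUpNorthEast (0, 0)]
  exact sq_le_siteBernoulli_percolationEvent_inter_swap negNorthEast neg_zero
    (not_transGen_northEast_self _)

lemma measure_clusterOP_mono {ρ ρ' : ℝ} (hρ : ρ ∈ Set.Icc 0 1) (hρ' : ρ' ∈ Set.Icc 0 1)
    (h : ρ ≤ ρ') {μ μ' : Measure Config} (hμ : IsBernoulli ρ μ) (hμ' : IsBernoulli ρ' μ')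
    (x : Site) : μ {η | (clusterOP η x).Infinite} ≤ μ' {η | (clusterOP η x).Infinite} := by
  rw [setOf_clusterOP_infinite, IsBernoulli.eq_siteBernoulli (p := ⟨ρ, hρ⟩) hμ,
    IsBernoulli.eq_siteBernoulli (p := ⟨ρ', hρ'⟩) hμ']
  exact monotone_siteBernoulli (isUpperSet_percolationEvent rightUp x)
    (measurableSet_percolationEvent rightUp x) h

lemma measure_clusterOP_eq_one {μ : Measure Config} (hμ : IsBernoulli 1 μ) (x : Site) :
    μ {η | (clusterOP η x).Infinite} = 1 := by
  rw [setOf_clusterOP_infinite, IsBernoulli.eq_siteBernoulli (p := 1) hμ]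
  exact siteBernoulli_one_percolationEvent (infinite_reflTransGen_rightUp x)

theorem final_density_lower_bound_and_rhoc_le_pcOP
    (μfam : ℝ → MeasureTheory.Measure Config)
    (hprob : ∀ ρ, MeasureTheory.IsProbabilityMeasure (μfam ρ))
    (hbern : ∀ ρ ∈ Set.Icc (0 : ℝ) 1, IsBernoulli ρ (μfam ρ)) :
    (∀ ρ ∈ Set.Icc (0 : ℝ) 1,
      (⨅ t : ℕ, μfam ρ {η | (T^[t] η) (0, 0) = true}) ≥
        μfam ρ ({η | (clusterNE η (0, 0)).Infinite} ∩ {η | (clusterSW η (0, 0)).Infinite}) ∧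
      μfam ρ ({η | (clusterNE η (0, 0)).Infinite} ∩ {η | (clusterSW η (0, 0)).Infinite}) ≥
        (μfam ρ {η | (clusterOP η (0, 0)).Infinite}) ^ 2) ∧
    sSup {ρ | ρ ∈ Set.Icc (0 : ℝ) 1 ∧
        (⨅ t : ℕ, μfam ρ {η | (T^[t] η) (0, 0) = true}) = 0} ≤
      sInf {ρ | ρ ∈ Set.Icc (0 : ℝ) 1 ∧
        0 < μfam ρ {η | (clusterOP η (0, 0)).Infinite}} := by
  have hdensity_ge (ρ : ℝ) := measure_clusterNE_inter_clusterSW_le_iInf (μfam ρ) (0, 0)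
  have hsq_le (ρ : ℝ) (hρ : ρ ∈ Set.Icc 0 1) := sq_measure_clusterOP_le hρ (hbern ρ hρ)
  refine ⟨fun ρ hρ => ⟨hdensity_ge ρ, hsq_le ρ hρ⟩,
    sSup_eq_zero_le_sInf_pos ?_ ?_ fun ρ hρ hdensity => ?_⟩
  · exact fun ρ hρ ρ' hρ' h => measure_clusterOP_mono hρ hρ' h (hbern ρ hρ) (hbern ρ' hρ') _
  · rw [measure_clusterOP_eq_one (hbern 1 (by simp))]
    exact one_pos
  · simpa using ((hsq_le ρ hρ).trans (hdensity_ge ρ)).trans_eq hdensity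
end

section
/- Suppose the octagon 𝒪_L is entirely empty in η and the site K_L^{NW} = −(L+1)e₁ has no occupied North-East path of vertical extent L starting from it (i.e., Γ^{NE,L}_{K_L^{NW}} = ∅). Then after L² steps of the spiral model dynamics the site K_L^{NW} is empty: T^{L²}η(K_L^{NW}) = 0. -/
open scoped Classical ENNReal

/-- The octagon `𝒪_L` centered at the origin, union of the quadrangles
`Q^{NW−NE}_L` (rows `0 ≤ y ≤ L−1`, `−(L−y) ≤ x ≤ L−y−1`) and
`Q^{SW−SE}_L` (rows `−L ≤ y ≤ −1`, `−(L+y+1) ≤ x ≤ L+y`). -/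
def octagon (L : ℕ) : Set Site :=
  {p | (0 ≤ p.2 ∧ p.2 ≤ (L : ℤ) - 1 ∧ -((L : ℤ) - p.2) ≤ p.1 ∧ p.1 ≤ (L : ℤ) - p.2 - 1) ∨
       (-(L : ℤ) ≤ p.2 ∧ p.2 ≤ -1 ∧ -((L : ℤ) + p.2 + 1) ≤ p.1 ∧ p.1 ≤ (L : ℤ) + p.2)}

def KNW (L : ℕ) : Site := (-(L : ℤ) - 1, 0)
def KNE (L : ℕ) : Site := (1, (L : ℤ))
def KSW (L : ℕ) : Site := (0, -(L : ℤ) - 1)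
def KSE (L : ℕ) : Site := ((L : ℤ) + 1, -1)

/-!
Each update that changes something in the finite cone of sites visible from `x` along North-East
paths empties one of them, so after at most `L (L + 1) / 2` updates the cone is stationary. In a
stationary cone with empty sites to its right, follow the rightmost occupied North-East path from
`x`, if `x` is still occupied. Everything between this path and the boundary is empty, row by row:
the first occupied site met when coming from the boundary would have empty South-West and
South-East neighbours. Hence the endpoint of the path has empty South-East neighbours, and being
stationary it must have an occupied North-East neighbour, so the path climbs `L` rows. As updates
only empty sites, it is also an occupied path of the original configuration.
-/

section Monotonicity

variable {η ζ : Config} {x y : Site}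

theorem emptyPair.of_le (h : η ≤ ζ) : emptyPair ζ x y → emptyPair η x y :=
  And.imp (fun hx => Bool.eq_false_of_le_false (hx ▸ h x))
    (fun hy => Bool.eq_false_of_le_false (hy ▸ h y))

theorem reachNE.of_le (h : η ≤ ζ) (hr : reachNE η x y) : reachNE ζ x y :=
  ⟨h x hr.1, Relation.ReflTransGen.mono (fun _ b hab => ⟨hab.1, h b hab.2⟩) _ _ hr.2⟩

theorem reachNE.tail {z : Site} (h : reachNE η x y) (hstep : NEstep η y z) : reachNE η x z :=
  ⟨h.1, h.2.tail hstep⟩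

theorem reachNE.right_eq_true (h : reachNE η x y) : η y = true := by
  obtain rfl | ⟨z, -, hzy⟩ := h.2.cases_tail
  · exact h.1
  · exact hzy.2

theorem T_le_id : T ≤ id := by
  intro η x h
  simp only [T, Bool.if_false_right, Bool.and_true, decide_eq_true_eq] at h
  exact h.1

theorem iterate_T_le (k : ℕ) (η : Config) : T^[k] η ≤ η :=
  Function.iterate_le_id_of_le_id T_le_id k η

theorem iterate_T_eq_false_of_le {k m : ℕ} (hkm : k ≤ m) (h : (T^[k] η) x = false) :
    (T^[m] η) x = false :=
  Bool.eq_false_of_le_false (h ▸ Function.antitone_iterate_of_le_id T_le_id hkm η x)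

end Monotonicity

section Stationarity

/-- The update `T` changes no site of `S`, i.e. `η` is stationary there. -/
def StationaryOn (η : Config) (S : Finset Site) : Prop := ∀ x ∈ S, T η x = η x

theorem eq_false_of_constraintA {η : Config} {x : Site} (hT : T η x = η x)
    (hA : constraintA η x) : η x = false := by
  rw [← hT]
  simp [T, hA]

theorem card_occupied_T_lt {η : Config} {S : Finset Site} (h : ¬ StationaryOn η S) :
    (S.filter (T η · = true)).card < (S.filter (η · = true)).card := by
  simp only [StationaryOn, not_forall] at h
  obtain ⟨x, hxS, hx⟩ := h
  have hsub : S.filter (T η · = true) ⊆ S.filter (η · = true) :=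
    Finset.monotone_filter_right S fun y _ hy => T_le_id η y hy
  have hlt : T η x < η x := lt_of_le_of_ne (T_le_id η x) hx
  obtain ⟨hT, hη⟩ := Bool.lt_iff.1 hlt
  refine Finset.card_lt_card ((Finset.ssubset_iff_of_subset hsub).2 ⟨x, ?_, ?_⟩)
  · simp [hxS, hη]
  · simp [hT]

theorem exists_stationaryOn_iterate (η : Config) (S : Finset Site) :
    ∃ k ≤ (S.filter (η · = true)).card, StationaryOn (T^[k] η) S := by
  by_cases h : StationaryOn η S
  · exact ⟨0, Nat.zero_le _, h⟩
  have hlt := card_occupied_T_lt h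
  obtain ⟨k, hk, hstat⟩ := exists_stationaryOn_iterate (T η) S
  exact ⟨k + 1, hk.trans_lt hlt, hstat⟩
termination_by (S.filter (η · = true)).card

end Stationarity

section Cone

/-- The sites less than `L` rows above `x` that a North-East path from `x` can visit. -/
def coneNE (x : Site) (L : ℕ) : Finset Site :=
  ((Finset.range L).sigma fun n => Finset.range (n + 1)).image fun q => (x.1 + q.2, x.2 + q.1)

variable {η : Config} {x y : Site} {L : ℕ}

theorem mem_coneNE :
    y ∈ coneNE x L ↔ x.1 ≤ y.1 ∧ y.1 - x.1 ≤ y.2 - x.2 ∧ y.2 - x.2 < L := by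
  simp only [coneNE, Finset.mem_image, Finset.mem_sigma, Finset.mem_range, Sigma.exists]
  constructor
  · rintro ⟨n, i, hni, rfl⟩
    dsimp only
    omega
  · intro hy
    exact ⟨(y.2 - x.2).toNat, (y.1 - x.1).toNat, by omega, by ext <;> dsimp only <;> omega⟩

theorem card_coneNE_le (x : Site) (L : ℕ) : (coneNE x L).card ≤ L * (L + 1) / 2 := by
  calc (coneNE x L).card
      ≤ ∑ n ∈ Finset.range L, (n + 1) := by
        refine Finset.card_image_le.trans_eq ?_
        simp only [Finset.card_sigma, Finset.card_range]
    _ = ∑ n ∈ Finset.range (L + 1), n := by simp [Finset.sum_range_succ']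
    _ = L * (L + 1) / 2 := by rw [Finset.sum_range_id, Nat.add_sub_cancel, mul_comm]

theorem reachNE.mem_cone (h : reachNE η x y) : x.1 ≤ y.1 ∧ y.1 - x.1 ≤ y.2 - x.2 := by
  obtain ⟨-, hpath⟩ := h
  induction hpath with
  | refl => simp
  | tail _ hstep ih =>
    obtain ⟨rfl | rfl, -⟩ := hstep <;> simp only [e1, e2, Prod.fst_add, Prod.snd_add] <;> omega

end Cone

section Rightmost

/-- The South-East neighbours of the first `L` sites of the diagonal from `x` are empty. These
sites are the boundary condition to the right of the cone `coneNE x L`. -/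
def EmptyAlongDiagonal (η : Config) (x : Site) (L : ℕ) : Prop :=
  ∀ n : ℤ, 0 ≤ n → n < L → emptyPair η (x.1 + n + 1, x.2 + n) (x.1 + n + 1, x.2 + n - 1)

/-- `y` can be the current endpoint of the rightmost occupied North-East path from `x`: its row is
empty from `y` to the first site beyond the diagonal from `x`, and so is the lower of its two
South-East neighbours. -/
structure IsRightmost (η : Config) (x y : Site) : Prop where
  reach : reachNE η x y
  row : ∀ i ∈ Set.Ioc y.1 (x.1 + (y.2 - x.2) + 1), η (i, y.2) = false
  southEast : η (y + e1 - e2) = false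

variable {η : Config} {x y : Site} {L : ℕ}

theorem EmptyAlongDiagonal.of_le {ζ : Config} (h : η ≤ ζ) (hd : EmptyAlongDiagonal ζ x L) :
    EmptyAlongDiagonal η x L :=
  fun n h0 hL => (hd n h0 hL).of_le h

/-- Going leftwards from `c`, each site of the upper row has both its South-West and its
South-East neighbours empty. -/
theorem row_succ_eq_false {b c n : ℤ}
    (hT : ∀ i ∈ Set.Ioo (b + 1) c, T η (i, n + 1) = η (i, n + 1))
    (hrow : ∀ i ∈ Set.Ioc b c, η (i, n) = false) (hc : η (c, n + 1) = false) :
    ∀ i ∈ Set.Ioc (b + 1) c, η (i, n + 1) = false := by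
  rintro i ⟨hbi, hic⟩
  induction i, hic using Int.leInductionDown with
  | base => exact hc
  | pred i hic ih =>
    have hSW : emptyPair η ((i - 1, n + 1) - e2) ((i - 1, n + 1) - e1 - e2) := by
      simp only [emptyPair, e1, e2, Prod.mk_sub_mk, sub_zero, add_sub_cancel_right]
      exact ⟨hrow _ ⟨by omega, by omega⟩, hrow _ ⟨by omega, by omega⟩⟩
    have hSE : emptyPair η ((i - 1, n + 1) + e1) ((i - 1, n + 1) + e1 - e2) := by
      simp only [emptyPair, e1, e2, Prod.mk_add_mk, Prod.mk_sub_mk, sub_add_cancel, add_zero,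
        sub_zero, add_sub_cancel_right]
      exact ⟨ih (by omega), hrow _ ⟨by omega, hic⟩⟩
    exact eq_false_of_constraintA (hT _ ⟨hbi, by omega⟩) ⟨.inr hSW, .inr hSE⟩

theorem IsRightmost.refl (hx : η x = true) (hd : EmptyAlongDiagonal η x L) (hL : 0 < L) :
    IsRightmost η x x := by
  obtain ⟨hE, hSE⟩ := hd 0 le_rfl (by exact_mod_cast hL)
  refine ⟨⟨hx, .refl⟩, fun i ⟨hxi, hi⟩ => ?_, ?_⟩
  · obtain rfl : i = x.1 + 1 := by omega
    simpa using hE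
  · convert hSE using 2
    ext <;> simp [e1, e2]

theorem IsRightmost.emptyPair_southEast (h : IsRightmost η x y) :
    emptyPair η (y + e1) (y + e1 - e2) := by
  have hcone := h.reach.mem_cone
  refine ⟨?_, h.southEast⟩
  simpa [e1, Prod.add_def] using h.row (y.1 + 1) ⟨by omega, by omega⟩

theorem IsRightmost.occupied_northEast (h : IsRightmost η x y) (hT : T η y = η y) :
    η (y + e1 + e2) = true ∨ η (y + e2) = true := by
  by_contra! hNE
  have hA : constraintA η y :=
    ⟨.inl ⟨by simpa using hNE.2, by simpa using hNE.1⟩, .inr h.emptyPair_southEast⟩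
  simpa [h.reach.right_eq_true] using eq_false_of_constraintA hT hA

theorem IsRightmost.exists_reachNE_succ (h : IsRightmost η x y) (hT : T η y = η y) :
    ∃ z, reachNE η x z ∧ z.2 = y.2 + 1 := by
  rcases h.occupied_northEast hT with hdiag | hup
  · exact ⟨_, h.reach.tail ⟨.inr rfl, hdiag⟩, by simp [e1, e2]⟩
  · exact ⟨_, h.reach.tail ⟨.inl rfl, hup⟩, by simp [e2]⟩

theorem IsRightmost.row_right (h : IsRightmost η x y) (hd : EmptyAlongDiagonal η x L)
    (hL : y.2 - x.2 + 1 < L) :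
    ∀ i ∈ Set.Ioc y.1 (x.1 + (y.2 - x.2) + 2), η (i, y.2) = false := by
  have hcone := h.reach.mem_cone
  rintro i ⟨hyi, hi⟩
  obtain rfl | hi := hi.eq_or_lt
  · convert (hd (y.2 - x.2 + 1) (by omega) hL).2 using 3 <;> ring
  · exact h.row i ⟨hyi, by omega⟩

theorem IsRightmost.row_above (h : IsRightmost η x y) (hd : EmptyAlongDiagonal η x L)
    (hstat : StationaryOn η (coneNE x L)) (hL : y.2 - x.2 + 1 < L) :
    ∀ i ∈ Set.Ioc (y.1 + 1) (x.1 + (y.2 - x.2) + 2), η (i, y.2 + 1) = false := by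
  have hcone := h.reach.mem_cone
  refine row_succ_eq_false (fun i ⟨hyi, hi⟩ => hstat _ (mem_coneNE.2 ?_)) (h.row_right hd hL) ?_
  · dsimp only
    omega
  · convert (hd (y.2 - x.2 + 1) (by omega) hL).1 using 3 <;> ring

theorem IsRightmost.exists_succ (h : IsRightmost η x y) (hd : EmptyAlongDiagonal η x L)
    (hstat : StationaryOn η (coneNE x L)) (hL : y.2 - x.2 + 1 < L) :
    ∃ z, IsRightmost η x z ∧ z.2 = y.2 + 1 := by
  obtain ⟨hcone₁, hcone₂⟩ := h.reach.mem_cone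
  have hright := h.row_right hd hL
  have habove := h.row_above hd hstat hL
  have hTy : T η y = η y := hstat y (mem_coneNE.2 ⟨hcone₁, hcone₂, by omega⟩)
  obtain ⟨y₁, y₂⟩ := y
  simp only at hcone₁ hcone₂ hright habove
  by_cases hdiag : η (y₁ + 1, y₂ + 1) = true
  · refine ⟨(y₁ + 1, y₂ + 1), ⟨h.reach.tail ⟨.inr (by simp [e1, e2]), hdiag⟩, ?_, ?_⟩, rfl⟩
    · exact fun i ⟨hyi, hi⟩ => habove i ⟨hyi, by dsimp only at hi; omega⟩
    · simpa [e1, e2] using hright (y₁ + 1 + 1) ⟨by omega, by omega⟩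
  · have hup : η (y₁, y₂ + 1) = true := by
      simpa [e1, e2, hdiag] using h.occupied_northEast hTy
    refine ⟨(y₁, y₂ + 1), ⟨h.reach.tail ⟨.inl (by simp [e2]), hup⟩, ?_, ?_⟩, rfl⟩
    · rintro i ⟨hyi, hi⟩
      dsimp only at hyi hi
      obtain rfl | hi' := (Int.add_one_le_of_lt hyi).eq_or_lt
      · simpa using hdiag
      · exact habove i ⟨hi', by omega⟩
    · simpa [e1, e2] using hright (y₁ + 1) ⟨by omega, by omega⟩

theorem exists_isRightmost (hx : η x = true) (hd : EmptyAlongDiagonal η x L)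
    (hstat : StationaryOn η (coneNE x L)) {n : ℕ} (hn : n < L) :
    ∃ y, IsRightmost η x y ∧ y.2 = x.2 + n := by
  induction n with
  | zero => exact ⟨x, .refl hx hd hn, by simp⟩
  | succ n ih =>
    obtain ⟨y, hy, hyn⟩ := ih (by omega)
    obtain ⟨z, hz, hzy⟩ := hy.exists_succ hd hstat (by omega)
    exact ⟨z, hz, by push_cast; omega⟩

theorem exists_reachNE_of_stationaryOn (hx : η x = true) (hd : EmptyAlongDiagonal η x L)
    (hstat : StationaryOn η (coneNE x L)) : ∃ y, reachNE η x y ∧ y.2 = x.2 + L := by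
  cases L with
  | zero => exact ⟨x, ⟨hx, .refl⟩, by simp⟩
  | succ n =>
    obtain ⟨y, hy, hyn⟩ := exists_isRightmost hx hd hstat n.lt_succ_self
    obtain ⟨hcone₁, hcone₂⟩ := hy.reach.mem_cone
    have hTy : T η y = η y := hstat y (mem_coneNE.2 ⟨hcone₁, hcone₂, by push_cast; omega⟩)
    obtain ⟨z, hz, hzy⟩ := hy.exists_reachNE_succ hTy
    exact ⟨z, hz, by push_cast; omega⟩

end Rightmost

theorem key_site_emptied_general {η : Config} {x : Site} {L k : ℕ}
    (hk : L * (L + 1) / 2 ≤ k) (hd : EmptyAlongDiagonal η x L)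
    (hΓ : ∀ y : Site, ¬ (reachNE η x y ∧ y.2 = x.2 + L)) :
    (T^[k] η) x = false := by
  obtain ⟨m, hm, hstat⟩ := exists_stationaryOn_iterate η (coneNE x L)
  have hmk : m ≤ k :=
    hm.trans <| (Finset.card_filter_le _ _).trans <| (card_coneNE_le x L).trans hk
  refine iterate_T_eq_false_of_le hmk (Bool.eq_false_iff.2 fun hx => ?_)
  have hle : T^[m] η ≤ η := iterate_T_le m η
  obtain ⟨y, hy, hyL⟩ := exists_reachNE_of_stationaryOn hx (hd.of_le hle) hstat
  exact hΓ y ⟨hy.of_le hle, hyL⟩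

theorem emptyAlongDiagonal_KNW {L : ℕ} {η : Config} (hO : ∀ p ∈ octagon L, η p = false) :
    EmptyAlongDiagonal η (KNW L) L := by
  intro n h0 hL
  constructor <;>
  · refine hO _ ?_
    simp only [octagon, KNW, Set.mem_ofPred_eq]
    omega

theorem key_site_emptied (L : ℕ) (hL : 1 ≤ L) (η : Config)
    (hO : ∀ p ∈ octagon L, η p = false)
    (hΓ : ∀ y : Site, ¬ (reachNE η (KNW L) y ∧ y.2 = (KNW L).2 + L)) :
    (T^[L * L] η) (KNW L) = false :=
  key_site_emptied_general (Nat.div_le_of_le_mul (by nlinarith)) (emptyAlongDiagonal_KNW hO) hΓ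
end
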